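/- arXiv:2501.14716 — 8 statements merged into one kernel-verified Lean document; each statement's English description precedes it below -/
import Mathlib

section
/- Let h ≥ 1 be an integer and set n = 2h+1. For all integers m and ℓ with m ≥ 2h and 0 ≤ ℓ ≤ m−2h, one has C^{m−2h+1}_ℓ(2h+1) · binom(m+1, m+1−2h) − C^{m−2h}_ℓ(2h+1) · binom(m, m−2h) = binom(m, 2h−1) · T^{m−2h+1}_ℓ(2h+1). -/
/-- Pochhammer (ascending factorial) symbol `(a)_m = a(a+1)⋯(a+m−1)` over `ℚ`. -/
noncomputable def poch (a : ℚ) (m : ℕ) : ℚ := Polynomial.eval a (ascPochhammer ℚ m)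

/-- Clifford–Appell coefficient `C_ℓ^k(n)` with `n = 2h+1`:
`binom(k,ℓ)·((n+1)/2)_{k−ℓ}·((n−1)/2)_ℓ/(n)_k`. -/
noncomputable def Ccoef (h k l : ℕ) : ℚ :=
  (k.choose l : ℚ) * poch ((h : ℚ) + 1) (k - l) * poch (h : ℚ) l / poch (2 * (h : ℚ) + 1) k

/-- Harmonic coefficient `T_ℓ^k(n)` with `n = 2h+1`:
`binom(k,ℓ)·((n−1)/2)_{k−ℓ}·((n−1)/2)_ℓ/(n−1)_k`. -/
noncomputable def Tcoef (h k l : ℕ) : ℚ :=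
  (k.choose l : ℚ) * poch (h : ℚ) (k - l) * poch (h : ℚ) l / poch (2 * (h : ℚ)) k

theorem poch_succ_right (a : ℚ) (k : ℕ) : poch a (k + 1) = poch a k * (a + k) :=
  ascPochhammer_succ_eval k a

theorem poch_succ_left (a : ℚ) (k : ℕ) : poch a (k + 1) = a * poch (a + 1) k := by
  simp [poch, ascPochhammer_succ_left]

theorem poch_natCast_add_one (a k : ℕ) :
    poch ((a : ℚ) + 1) k = (k.factorial : ℚ) * ((a + k).choose k : ℚ) := by
  have e := ascPochhammer_eval_cast (S := ℚ) k (a + 1)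
  rw [ascPochhammer_nat_eq_ascFactorial, Nat.ascFactorial_eq_factorial_mul_choose] at e
  push_cast at e
  exact e.symm

/-- The binomial coefficient `binom(a+k, k) = (a+1)_k / k!` cancels the denominator `(a+1)_k`. -/
theorem choose_mul_div_poch_mul_choose (a l j : ℕ) (x y : ℚ) :
    ((l + j).choose l : ℚ) * x * y / poch ((a : ℚ) + 1) (l + j) * ((a + (l + j)).choose (l + j) : ℚ)
      = x * y / (l.factorial * j.factorial) := by
  have hc : ((a + (l + j)).choose (l + j) : ℚ) ≠ 0 := by
    exact_mod_cast (Nat.choose_pos (Nat.le_add_left _ _)).ne'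
  have hk : ((l + j).factorial : ℚ) ≠ 0 := by exact_mod_cast Nat.factorial_ne_zero _
  rw [poch_natCast_add_one, Nat.cast_add_choose]
  field_simp

/-- For `h ≥ 1`, `n = 2h+1`, `m ≥ 2h` and `0 ≤ ℓ ≤ m−2h`:
`C^{m−2h+1}_ℓ(2h+1)·binom(m+1, m+1−2h) − C^{m−2h}_ℓ(2h+1)·binom(m, m−2h)
  = binom(m, 2h−1)·T^{m−2h+1}_ℓ(2h+1)`. -/
theorem statement1 (h m l : ℕ) (hh : 1 ≤ h) (hm : 2 * h ≤ m) (hl : l ≤ m - 2 * h) :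
    Ccoef h (m + 1 - 2 * h) l * ((m + 1).choose (m + 1 - 2 * h) : ℚ)
      - Ccoef h (m - 2 * h) l * (m.choose (m - 2 * h) : ℚ)
      = (m.choose (2 * h - 1) : ℚ) * Tcoef h (m + 1 - 2 * h) l := by
  obtain ⟨k, rfl⟩ := Nat.exists_eq_add_of_le hm
  rw [Nat.add_sub_cancel_left] at hl
  obtain ⟨j, rfl⟩ := Nat.exists_eq_add_of_le hl
  have e₁ : 2 * h + (l + j) + 1 - 2 * h = l + (j + 1) := by omega
  have e₂ : 2 * h + (l + j) - 2 * h = l + j := by omega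
  have e₃ : l + (j + 1) - l = j + 1 := by omega
  have e₄ : l + j - l = j := by omega
  have e₅ : (2 * h + (l + j)).choose (2 * h - 1)
      = (2 * h - 1 + (l + (j + 1))).choose (l + (j + 1)) := by
    rw [show 2 * h + (l + j) = 2 * h - 1 + (l + (j + 1)) by omega, Nat.choose_symm_add]
  have e₆ : (2 * (h : ℚ)) = ((2 * h - 1 : ℕ) : ℚ) + 1 := by
    rw [Nat.cast_sub (by omega)]
    push_cast
    ring
  have c₁ := choose_mul_div_poch_mul_choose (2 * h) l (j + 1)
    (poch ((h : ℚ) + 1) (j + 1)) (poch h l)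
  have c₂ := choose_mul_div_poch_mul_choose (2 * h) l j (poch ((h : ℚ) + 1) j) (poch h l)
  have c₃ := choose_mul_div_poch_mul_choose (2 * h - 1) l (j + 1) (poch h (j + 1)) (poch h l)
  rw [← e₆] at c₃
  simp only [Nat.cast_mul, Nat.cast_ofNat] at c₁ c₂
  rw [e₁, e₂, e₅, mul_comm (Nat.cast _ : ℚ) (Tcoef _ _ _)]
  simp only [Ccoef, Tcoef, e₃, e₄]
  rw [show 2 * h + (l + j) + 1 = 2 * h + (l + (j + 1)) by ring, c₁, c₂, c₃,
    poch_succ_right, poch_succ_left, Nat.factorial_succ]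
  push_cast
  have hl₀ : (l.factorial : ℚ) ≠ 0 := by exact_mod_cast Nat.factorial_ne_zero _
  have hj₀ : (j.factorial : ℚ) ≠ 0 := by exact_mod_cast Nat.factorial_ne_zero _
  field_simp
  ring
end

section
/- Let h ≥ 1 and ℓ be integers with 1 ≤ ℓ ≤ h, and let k be an integer with k ≥ 2ℓ−1. Then Σ_{α=0}^{h−ℓ} Σ_{β=0}^{α} binom(2h−2α+β−2ℓ+k, 2h−1) · binom(h−ℓ, α) · binom(α, β) · (−2)^β = k! / ((2ℓ−1)! · (k−2ℓ+1)!), as an identity of rational (or real) numbers. -/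
open Polynomial in
/-- Binomial expansion of `X ^ (2 * m) = (Y ^ 2 + (1 - 2 * Y)) ^ m` for `Y = 1 + X`, times `Y ^ k`. -/
theorem sum_one_add_X_pow_eq (m k : ℕ) :
    ∑ α ∈ Finset.range (m + 1), ∑ β ∈ Finset.range (α + 1),
        (1 + X : ℚ[X]) ^ (2 * (m - α) + β + k)
          * C ((m.choose α : ℚ) * (α.choose β : ℚ) * (-2 : ℚ) ^ β)
      = (1 + X) ^ k * X ^ (2 * m) := by
  have hX : (X : ℚ[X]) ^ (2 * m) = ((-2 * (1 + X) + 1) + (1 + X) ^ 2) ^ m := by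
    rw [pow_mul]
    ring
  rw [hX, add_pow (-2 * (1 + X) + 1), Finset.mul_sum]
  refine Finset.sum_congr rfl fun α _ => ?_
  rw [add_pow (-2 * (1 + X)), Finset.sum_mul, Finset.sum_mul, Finset.mul_sum]
  refine Finset.sum_congr rfl fun β _ => ?_
  simp only [C_mul, C_pow, C_neg, map_natCast, map_ofNat, one_pow, mul_pow, pow_add, pow_mul]
  ring

/-- For integers `1 ≤ ℓ ≤ h` and `k ≥ 2ℓ−1`:
`Σ_{α=0}^{h−ℓ} Σ_{β=0}^{α} binom(2h−2α+β−2ℓ+k, 2h−1)·binom(h−ℓ,α)·binom(α,β)·(−2)^β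
  = k!/((2ℓ−1)!·(k−2ℓ+1)!)`. -/
theorem statement5 (h l k : ℕ) (hl1 : 1 ≤ l) (hlh : l ≤ h) (hk : 2 * l - 1 ≤ k) :
    ∑ α ∈ Finset.range (h - l + 1), ∑ β ∈ Finset.range (α + 1),
        ((2 * h - 2 * α + β - 2 * l + k).choose (2 * h - 1) : ℚ)
          * ((h - l).choose α : ℚ) * (α.choose β : ℚ) * (-2 : ℚ) ^ β
      = (k.factorial : ℚ) / (((2 * l - 1).factorial : ℚ) * ((k + 1 - 2 * l).factorial : ℚ)) := by
  have hcoeff := congrArg (fun p => Polynomial.coeff p (2 * h - 1))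
    (sum_one_add_X_pow_eq (h - l) k)
  have hdeg : 2 * h - 1 = 2 * l - 1 + 2 * (h - l) := by omega
  have hright : ((1 + Polynomial.X : Polynomial ℚ) ^ k * Polynomial.X ^ (2 * (h - l))).coeff
      (2 * h - 1) = (k.choose (2 * l - 1) : ℚ) := by
    rw [hdeg, Polynomial.coeff_mul_X_pow, Polynomial.coeff_one_add_X_pow]
  have hsub : k + 1 - 2 * l = k - (2 * l - 1) := by omega
  rw [hsub, ← Nat.cast_choose ℚ hk, ← hright, ← hcoeff]
  simp only [Polynomial.finsetSum_coeff, Polynomial.coeff_mul_C, Polynomial.coeff_one_add_X_pow]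
  refine Finset.sum_congr rfl fun α hα => Finset.sum_congr rfl fun β _ => ?_
  have hα' := Finset.mem_range.mp hα
  have hexp : 2 * h - 2 * α + β - 2 * l + k = 2 * (h - l - α) + β + k := by omega
  rw [hexp]
  ring
end

section
/- Let h ≥ 2 and α be integers with 1 ≤ α ≤ h−1, and let k be an integer with k ≥ 2α. Then Σ_{ℓ=0}^{h−α} Σ_{ν=0}^{ℓ} binom(h−α, ℓ) · binom(ℓ, ν) · binom(k+2h−2α−2ℓ+ν, 2h) · (−2)^ν = k! / ((2α)! · (k−2α)!), as an identity of rational (or real) numbers. -/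
open Finset Polynomial in
/-- Expansion of `(X - 1) ^ (2 * m)` obtained from `(X - 1) ^ 2 = (-2 * X + 1) + X ^ 2`. -/
lemma X_sub_one_pow_two_mul (m : ℕ) :
    (X - 1 : ℤ[X]) ^ (2 * m) = ∑ l ∈ range (m + 1), ∑ ν ∈ range (l + 1),
      ((m.choose l : ℤ) * (l.choose ν : ℤ) * (-2) ^ ν) • X ^ (2 * (m - l) + ν) := by
  have hsq : (X - 1 : ℤ[X]) ^ 2 = (-2 * X + 1) + X ^ 2 := by ring
  rw [pow_mul, hsq, add_pow]
  refine sum_congr rfl fun l _ ↦ ?_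
  rw [add_pow, sum_mul, sum_mul]
  refine sum_congr rfl fun ν _ ↦ ?_
  rw [zsmul_eq_mul, pow_add, pow_mul, mul_pow]
  push_cast
  ring

open Finset Polynomial fwdDiff_aux in
/-- The forward difference of order `2 * m` as a double sum of shifts. -/
lemma fwdDiff_iter_two_mul_eq_sum (f : ℕ → ℤ) (m n : ℕ) :
    (fwdDiff 1)^[2 * m] f n = ∑ l ∈ range (m + 1), ∑ ν ∈ range (l + 1),
      (m.choose l : ℤ) * (l.choose ν : ℤ) * (-2) ^ ν * f (n + (2 * (m - l) + ν)) := by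
  have hE : fwdDiffₗ ℕ ℤ 1 = aeval (shiftₗ ℕ ℤ 1) (X - 1 : ℤ[X]) := by simp [shiftₗ]
  rw [← coe_fwdDiffₗ_pow, hE, ← map_pow, X_sub_one_pow_two_mul]
  simp only [map_sum, map_zsmul, map_pow, aeval_X, LinearMap.sum_apply, Finset.sum_apply,
    LinearMap.smul_apply, Pi.smul_apply, shiftₗ_pow_apply, smul_eq_mul, mul_one]


/-- For integers `2 ≤ h`, `1 ≤ α ≤ h−1` and `k ≥ 2α`:
`Σ_{ℓ=0}^{h−α} Σ_{ν=0}^{ℓ} binom(h−α,ℓ)·binom(ℓ,ν)·binom(k+2h−2α−2ℓ+ν, 2h)·(−2)^ν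
  = k!/((2α)!·(k−2α)!)`. -/
theorem statement6 (h α k : ℕ) (hh : 2 ≤ h) (hα1 : 1 ≤ α) (hαh : α ≤ h - 1) (hk : 2 * α ≤ k) :
    ∑ l ∈ Finset.range (h - α + 1), ∑ ν ∈ Finset.range (l + 1),
        ((h - α).choose l : ℚ) * (l.choose ν : ℚ)
          * ((k + 2 * h - 2 * α - 2 * l + ν).choose (2 * h) : ℚ) * (-2 : ℚ) ^ ν
      = (k.factorial : ℚ) / (((2 * α).factorial : ℚ) * ((k - 2 * α).factorial : ℚ)) := by
  obtain ⟨m, rfl⟩ := Nat.exists_eq_add_of_le (show α ≤ h by omega)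
  have hΔ := congr_fun (fwdDiff_iter_choose (2 * α) (2 * m)) k
  rw [fwdDiff_iter_two_mul_eq_sum] at hΔ
  rw [← Nat.cast_choose ℚ hk, ← Int.cast_natCast (k.choose _), ← hΔ, Nat.add_sub_cancel_left]
  push_cast
  refine Finset.sum_congr rfl fun l hl ↦ Finset.sum_congr rfl fun ν _ ↦ ?_
  have hlm : l ≤ m := Nat.lt_succ_iff.mp (Finset.mem_range.mp hl)
  rw [show k + 2 * (α + m) - 2 * α - 2 * l + ν = k + (2 * (m - l) + ν) by omega,
    show 2 * (α + m) = 2 * m + 2 * α by ring]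
  ring
end

section
/- Let h ≥ 1 and ℓ be integers with 0 ≤ ℓ ≤ h−1, and let k be an integer with k ≥ 2h. Then Σ_{i=0}^{h−ℓ} (−1)^{i+h−ℓ} · binom(h−ℓ, i) · binom(k−i−ℓ+h, 2h) = (−1)^{h−ℓ} · ((h−ℓ)! · k! / ((k−h−ℓ)! · (2h)!)) · binom(2h, h−ℓ), as an identity of rational (or real) numbers. -/
/-- The `m`-th finite difference of a binomial coefficient, as an alternating sum. -/
theorem sum_range_neg_one_pow_mul_choose_mul_choose (m n r : ℕ) :
    ∑ i ∈ Finset.range (m + 1),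
        (-1 : ℤ) ^ i * (m.choose i : ℤ) * ((n + (m - i)).choose (m + r) : ℤ) = n.choose r := by
  have hdiff := congrFun (fwdDiff_iter_choose r m) n
  rw [fwdDiff_iter_eq_sum_shift, ← Finset.sum_range_reflect] at hdiff
  rw [← hdiff]
  refine Finset.sum_congr rfl fun i hi => ?_
  have him : i ≤ m := Nat.lt_succ_iff.mp (Finset.mem_range.mp hi)
  rw [Nat.add_sub_cancel, Nat.sub_sub_self him, Nat.choose_symm him]
  simp

/-- For integers `1 ≤ h`, `0 ≤ ℓ ≤ h−1` and `k ≥ 2h`: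
`Σ_{i=0}^{h−ℓ} (−1)^{i+h−ℓ}·binom(h−ℓ,i)·binom(k−i−ℓ+h, 2h)
  = (−1)^{h−ℓ}·((h−ℓ)!·k!/((k−h−ℓ)!·(2h)!))·binom(2h, h−ℓ)`. -/
theorem statement7 (h l k : ℕ) (hh : 1 ≤ h) (hl : l ≤ h - 1) (hk : 2 * h ≤ k) :
    ∑ i ∈ Finset.range (h - l + 1),
        (-1 : ℚ) ^ (i + h - l) * ((h - l).choose i : ℚ) * ((k - i - l + h).choose (2 * h) : ℚ)
      = (-1 : ℚ) ^ (h - l)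
          * (((h - l).factorial : ℚ) * (k.factorial : ℚ)
              / (((k - h - l).factorial : ℚ) * ((2 * h).factorial : ℚ)))
          * ((2 * h).choose (h - l) : ℚ) := by
  obtain ⟨m, rfl⟩ : ∃ m, h = l + m := ⟨h - l, by omega⟩
  obtain ⟨d, rfl⟩ : ∃ d, k = 2 * l + m + d := ⟨k - (2 * l + m), by omega⟩
  have hsum := congrArg (Int.cast : ℤ → ℚ)
    (sum_range_neg_one_pow_mul_choose_mul_choose m (2 * l + m + d) (2 * l + m))
  push_cast at hsum
  have hdenom : 2 * l + m + d - (l + m) - l = d := by omega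
  rw [Nat.add_sub_cancel_left, hdenom]
  calc
    _ = (-1 : ℚ) ^ m * ((2 * l + m + d).choose (2 * l + m) : ℚ) := by
      rw [← hsum, Finset.mul_sum]
      refine Finset.sum_congr rfl fun i hi => ?_
      have him : i ≤ m := Nat.lt_succ_iff.mp (Finset.mem_range.mp hi)
      rw [show i + (l + m) - l = m + i by omega,
        show 2 * l + m + d - i - l + (l + m) = 2 * l + m + d + (m - i) by omega,
        show 2 * (l + m) = m + (2 * l + m) by ring, pow_add]
      ring
    _ = _ := by
      rw [show 2 * (l + m) = m + (2 * l + m) by ring, Nat.cast_add_choose, Nat.cast_add_choose]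
      field_simp
end

section
/- Let h ≥ 1 and ℓ be integers with 0 ≤ ℓ ≤ h−1, and let k be an integer with h+ℓ ≤ k < 2h. Then Σ_{i=0}^{h−ℓ} (−1)^{i+h−ℓ} · binom(h−ℓ, i) · binom(k−i−ℓ+h, 2h) = (−1)^{h−ℓ} · binom(k, k−h−ℓ), as an identity of integers (or rationals). -/
/-- Alternating Vandermonde-type sum: the `n`-th backward difference of a binomial coefficient. -/
theorem sum_neg_one_pow_mul_choose_mul_choose_sub (n M p : ℕ) :
    ∑ i ∈ Finset.range (n + 1),
        (-1 : ℤ) ^ i * (n.choose i : ℤ) * ((M + n - i).choose (p + n) : ℤ) = M.choose p := by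
  have hdiff := congrFun (fwdDiff_iter_choose p n) M
  rw [fwdDiff_iter_eq_sum_shift, ← Finset.sum_range_reflect] at hdiff
  rw [← hdiff]
  refine Finset.sum_congr rfl fun i hi => ?_
  have hin : i ≤ n := by simpa [Nat.lt_succ_iff] using hi
  have hsub : n + 1 - 1 - i = n - i := by omega
  rw [hsub, Nat.sub_sub_self hin, Nat.choose_symm hin, smul_eq_mul, smul_eq_mul, mul_one,
    Nat.add_sub_assoc hin, add_comm p n]

/-- For integers `1 ≤ h`, `0 ≤ ℓ ≤ h−1` and `h+ℓ ≤ k < 2h`: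
`Σ_{i=0}^{h−ℓ} (−1)^{i+h−ℓ}·binom(h−ℓ,i)·binom(k−i−ℓ+h, 2h) = (−1)^{h−ℓ}·binom(k, k−h−ℓ)`. -/
theorem statement8 (h l k : ℕ) (hh : 1 ≤ h) (hl : l ≤ h - 1)
    (hk1 : h + l ≤ k) (hk2 : k < 2 * h) :
    ∑ i ∈ Finset.range (h - l + 1),
        (-1 : ℤ) ^ (i + h - l) * ((h - l).choose i : ℤ) * ((k - i - l + h).choose (2 * h) : ℤ)
      = (-1 : ℤ) ^ (h - l) * (k.choose (k - h - l) : ℤ) := by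
  rw [Nat.sub_sub, Nat.choose_symm hk1, ← sum_neg_one_pow_mul_choose_mul_choose_sub (h - l),
    Finset.mul_sum]
  refine Finset.sum_congr rfl fun i hi => ?_
  have hi' := Finset.mem_range.mp hi
  have hexp : i + h - l = (h - l) + i := by omega
  have htop : k - i - l + h = k + (h - l) - i := by omega
  have hbot : 2 * h = h + l + (h - l) := by omega
  rw [hexp, htop, hbot, pow_add]
  ring
end

section
/- Let x, s be quaternions with ‖x‖ < ‖s‖. For each k ∈ ℕ define H_k(x) := Σ_{ℓ=0}^{k} x^{k−ℓ} · x̄^{ℓ}. Then the family k ↦ H_k(x) · (s^{k+2})⁻¹ is summable in ℍ and Σ_{k=0}^{∞} H_k(x) · (s^{k+2})⁻¹ = (s² − 2(re x)·s + ‖x‖²)⁻¹. (In particular s ≠ 0 and s² − 2(re x)·s + ‖x‖² ≠ 0 under the hypothesis.) -/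
open Quaternion

/-- The axially polyharmonic polynomials `H_k(x) = Σ_{ℓ=0}^{k} x^{k−ℓ}·x̄^{ℓ}`. -/
noncomputable def Hpoly (x : ℍ[ℝ]) (k : ℕ) : ℍ[ℝ] :=
  ∑ l ∈ Finset.range (k + 1), x ^ (k - l) * (star x) ^ l

theorem Hpoly_zero (x : ℍ[ℝ]) : Hpoly x 0 = 1 := by
  simp [Hpoly]

theorem Hpoly_succ (x : ℍ[ℝ]) (k : ℕ) :
    Hpoly x (k + 1) = x * Hpoly x k + star x ^ (k + 1) := by
  rw [Hpoly, Finset.sum_range_succ, Hpoly, Finset.mul_sum]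
  congr 1
  · refine Finset.sum_congr rfl fun l hl => ?_
    have hl' : k + 1 - l = (k - l) + 1 := by
      have := Finset.mem_range.mp hl
      omega
    rw [hl', pow_succ', mul_assoc]
  · simp

theorem Quaternion.add_star_eq_smul_one (x : ℍ[ℝ]) :
    x + star x = (2 * x.re) • (1 : ℍ[ℝ]) := by
  ext <;> simp [two_mul]

theorem Quaternion.star_mul_self_eq_smul_one (x : ℍ[ℝ]) :
    star x * x = (‖x‖ ^ 2) • (1 : ℍ[ℝ]) := by
  rw [Quaternion.star_mul_self, Quaternion.normSq_eq_norm_mul_self, ← sq,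
    ← Quaternion.coe_mul_eq_smul, mul_one]

theorem Hpoly_one (x : ℍ[ℝ]) : Hpoly x 1 = (2 * x.re) • (1 : ℍ[ℝ]) := by
  rw [Hpoly_succ, Hpoly_zero, ← Quaternion.add_star_eq_smul_one]
  simp

/-- The three-term recurrence `H_{k+2} = 2 (re x) H_{k+1} - ‖x‖² H_k`. -/
theorem Hpoly_add_two (x : ℍ[ℝ]) (k : ℕ) :
    Hpoly x (k + 2) = (2 * x.re) • Hpoly x (k + 1) - (‖x‖ ^ 2) • Hpoly x k := by
  have trace : (2 * x.re) • Hpoly x (k + 1) = (x + star x) * Hpoly x (k + 1) := by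
    rw [Quaternion.add_star_eq_smul_one, smul_mul_assoc, one_mul]
  have norm : (‖x‖ ^ 2) • Hpoly x k = star x * (x * Hpoly x k) := by
    rw [← mul_assoc, Quaternion.star_mul_self_eq_smul_one, smul_mul_assoc, one_mul]
  rw [trace, norm, Hpoly_succ x (k + 1), add_mul, add_sub_assoc, ← mul_sub]
  congr 1
  rw [Hpoly_succ x k, add_sub_cancel_left, ← pow_succ']

theorem norm_Hpoly_le (x : ℍ[ℝ]) (k : ℕ) : ‖Hpoly x k‖ ≤ (k + 1) * ‖x‖ ^ k := by
  refine (norm_sum_le _ _).trans ?_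
  have hterm : ∀ l ∈ Finset.range (k + 1), ‖x ^ (k - l) * star x ^ l‖ = ‖x‖ ^ k := by
    intro l hl
    have hlk : l ≤ k := Nat.lt_succ_iff.mp (Finset.mem_range.mp hl)
    rw [norm_mul, norm_pow, norm_pow, Quaternion.norm_star, ← pow_add, Nat.sub_add_cancel hlk]
  rw [Finset.sum_congr rfl hterm]
  simp

theorem summable_Hpoly_mul_pow (x u : ℍ[ℝ]) (h : ‖x‖ * ‖u‖ < 1) :
    Summable fun k : ℕ => Hpoly x k * u ^ k := by
  have hr : ‖‖x‖ * ‖u‖‖ < 1 := by rwa [Real.norm_of_nonneg (by positivity)]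
  have hmajorant : Summable fun k : ℕ => (k : ℝ) * (‖x‖ * ‖u‖) ^ k + (‖x‖ * ‖u‖) ^ k := by
    simpa using (summable_pow_mul_geometric_of_norm_lt_one 1 hr).add
      (summable_geometric_of_norm_lt_one hr)
  refine Summable.of_norm_bounded hmajorant fun k => ?_
  calc ‖Hpoly x k * u ^ k‖ = ‖Hpoly x k‖ * ‖u‖ ^ k := by rw [norm_mul, norm_pow]
    _ ≤ ((k + 1) * ‖x‖ ^ k) * ‖u‖ ^ k := by gcongr; exact norm_Hpoly_le x k
    _ = k * (‖x‖ * ‖u‖) ^ k + (‖x‖ * ‖u‖) ^ k := by ring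

/-- The generating function of the `H_k`, with the variable on the right. -/
theorem tsum_Hpoly_mul_pow_mul (x u : ℍ[ℝ]) (h : ‖x‖ * ‖u‖ < 1) :
    (∑' k : ℕ, Hpoly x k * u ^ k) * (1 - (2 * x.re) • u + (‖x‖ ^ 2) • u ^ 2) = 1 := by
  have hg := summable_Hpoly_mul_pow x u h
  have hg' := (summable_nat_add_iff 1).mpr hg
  set G := ∑' k : ℕ, Hpoly x k * u ^ k with hG
  have hshift : G = 1 + ∑' k : ℕ, Hpoly x (k + 1) * u ^ (k + 1) := by
    rw [hG, hg.tsum_eq_zero_add, Hpoly_zero, pow_zero, one_mul]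
  have hshift_two : ∑' k : ℕ, Hpoly x (k + 1) * u ^ (k + 1) =
      (2 * x.re) • u + ∑' k : ℕ, Hpoly x (k + 2) * u ^ (k + 2) := by
    rw [hg'.tsum_eq_zero_add, zero_add, Hpoly_one, pow_one, smul_mul_assoc, one_mul]
  have hrec : ∑' k : ℕ, Hpoly x (k + 2) * u ^ (k + 2) =
      (2 * x.re) • ((∑' k : ℕ, Hpoly x (k + 1) * u ^ (k + 1)) * u) -
        (‖x‖ ^ 2) • (G * u ^ 2) := by
    rw [hG, ← hg'.tsum_mul_right, ← hg.tsum_mul_right,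
      ← (hg'.mul_right u).tsum_const_smul, ← (hg.mul_right (u ^ 2)).tsum_const_smul,
      ← ((hg'.mul_right u).const_smul _).tsum_sub ((hg.mul_right (u ^ 2)).const_smul _)]
    refine tsum_congr fun k => ?_
    rw [Hpoly_add_two, sub_mul, smul_mul_assoc, smul_mul_assoc, mul_assoc, mul_assoc,
      ← pow_succ, ← pow_add]
  rw [hrec, ← sub_eq_iff_eq_add'.mpr hshift, sub_mul, one_mul, smul_sub] at hshift_two
  rw [mul_add, mul_sub, mul_one, mul_smul_comm, mul_smul_comm]
  rw [← sub_eq_zero] at hshift_two ⊢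
  rw [← hshift_two]
  abel

/-- For quaternions `x, s` with `‖x‖ < ‖s‖`: `s ≠ 0`, the commutative pseudo-Cauchy kernel
`Q_{c,s}(x) = s² − 2(re x)·s + ‖x‖²` is nonzero, the family `k ↦ H_k(x)·(s^{k+2})⁻¹` is
summable, and its sum equals `(s² − 2(re x)·s + ‖x‖²)⁻¹`. -/
theorem statement9 (x s : ℍ[ℝ]) (hxs : ‖x‖ < ‖s‖) :
    s ≠ 0 ∧
    (s ^ 2 - 2 * ((x.re : ℝ) : ℍ[ℝ]) * s + ((‖x‖ ^ 2 : ℝ) : ℍ[ℝ])) ≠ 0 ∧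
    Summable (fun k : ℕ => Hpoly x k * (s ^ (k + 2))⁻¹) ∧
    ∑' k : ℕ, Hpoly x k * (s ^ (k + 2))⁻¹
      = (s ^ 2 - 2 * ((x.re : ℝ) : ℍ[ℝ]) * s + ((‖x‖ ^ 2 : ℝ) : ℍ[ℝ]))⁻¹ := by
  have hs_norm : 0 < ‖s‖ := (norm_nonneg x).trans_lt hxs
  have hs : s ≠ 0 := norm_pos_iff.mp hs_norm
  have hlt : ‖x‖ * ‖s⁻¹‖ < 1 := by
    rwa [norm_inv, ← div_eq_mul_inv, div_lt_one hs_norm]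
  have hg := summable_Hpoly_mul_pow x s⁻¹ hlt
  have hterm : (fun k : ℕ => Hpoly x k * (s ^ (k + 2))⁻¹) =
      fun k : ℕ => Hpoly x k * s⁻¹ ^ k * s⁻¹ ^ 2 := by
    funext k
    rw [← inv_pow, pow_add, mul_assoc]
  have hkernel : s ^ 2 - 2 * ((x.re : ℝ) : ℍ[ℝ]) * s + ((‖x‖ ^ 2 : ℝ) : ℍ[ℝ]) =
      s ^ 2 - (2 * x.re) • s + (‖x‖ ^ 2) • (1 : ℍ[ℝ]) := by
    rw [← Quaternion.coe_mul_eq_smul, ← Quaternion.coe_mul_eq_smul, mul_one, Quaternion.coe_mul]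
    rfl
  have hfactor : s⁻¹ ^ 2 * (s ^ 2 - (2 * x.re) • s + (‖x‖ ^ 2) • (1 : ℍ[ℝ])) =
      1 - (2 * x.re) • s⁻¹ + (‖x‖ ^ 2) • s⁻¹ ^ 2 := by
    rw [mul_add, mul_sub, mul_smul_comm, mul_smul_comm, mul_one, inv_pow,
      inv_mul_cancel₀ (pow_ne_zero 2 hs), ← inv_pow, pow_two s⁻¹, mul_assoc,
      inv_mul_cancel₀ hs, mul_one]
  have hprod := tsum_Hpoly_mul_pow_mul x s⁻¹ hlt
  rw [← hfactor, ← mul_assoc, ← hg.tsum_mul_right] at hprod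
  rw [hkernel, hterm]
  exact ⟨hs, right_ne_zero_of_mul_eq_one hprod, hg.mul_right _, eq_inv_of_mul_eq_one_left hprod⟩
end

section
/- Let s, x ∈ ℍ with Q_{c,s}(x) := s² − 2(re x)·s + ‖x‖² ≠ 0, and let m ∈ ℕ. Define F : ℍ → ℍ by F(y) = (s − ȳ) · (s² − 2(re y)·s + ‖y‖²)^{−m}. Then F is (real) differentiable at x and (D F)(x) := ∂₀F(x) + i·∂₁F(x) + j·∂₂F(x) + k·∂₃F(x) = 2(m − 2) · Q_{c,s}(x)^{−m}. -/
open Quaternion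

/-- The basis quaternion `i`. -/
def qi : ℍ[ℝ] := ⟨0, 1, 0, 0⟩
/-- The basis quaternion `j`. -/
def qj : ℍ[ℝ] := ⟨0, 0, 1, 0⟩
/-- The basis quaternion `k`. -/
def qk : ℍ[ℝ] := ⟨0, 0, 0, 1⟩

/-- The Cauchy–Fueter (Dirac) operator
`(D F)(x) = ∂₀F(x) + i·∂₁F(x) + j·∂₂F(x) + k·∂₃F(x)`, where `∂_μF(x)` is the real Fréchet
derivative of `F` at `x` applied to the basis quaternion `e_μ`. -/
noncomputable def Dirac (F : ℍ[ℝ] → ℍ[ℝ]) (x : ℍ[ℝ]) : ℍ[ℝ] :=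
  fderiv ℝ F x 1 + qi * fderiv ℝ F x qi + qj * fderiv ℝ F x qj + qk * fderiv ℝ F x qk

/-- The commutative pseudo-Cauchy kernel `Q_{c,s}(y) = s² − 2(re y)·s + ‖y‖²`. -/
noncomputable def Qcs (s y : ℍ[ℝ]) : ℍ[ℝ] :=
  s ^ 2 - 2 * ((y.re : ℝ) : ℍ[ℝ]) * s + ((‖y‖ ^ 2 : ℝ) : ℍ[ℝ])

/-- The differential of `y ↦ s² − 2(re y)·s + ‖y‖²` at `x`. -/
noncomputable def QcsDeriv (s x : ℍ[ℝ]) : ℍ[ℝ] →L[ℝ] ℍ[ℝ] :=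
  LinearMap.toContinuousLinearMap
    { toFun := fun v => (-2 * v.re) • s + ((2 * inner ℝ x v : ℝ) : ℍ[ℝ])
      map_add' := fun v w => by
        rw [inner_add_right, mul_add, Quaternion.re_add, Quaternion.coe_add]; module
      map_smul' := fun c v => by
        ext <;> simp [inner_smul_right] <;> ring }

theorem QcsDeriv_apply (s x v : ℍ[ℝ]) :
    QcsDeriv s x v = (-2 * v.re) • s + ((2 * inner ℝ x v : ℝ) : ℍ[ℝ]) := rfl

theorem hasFDerivAt_Qcs (s x : ℍ[ℝ]) : HasFDerivAt (Qcs s) (QcsDeriv s x) x := by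
  let R : ℍ[ℝ] →L[ℝ] ℝ := LinearMap.toContinuousLinearMap
    { toFun := fun v => v.re, map_add' := fun _ _ => rfl, map_smul' := fun _ _ => by simp }
  have hR : ∀ v, R v = v.re := fun _ => rfl
  have h := (((R.hasFDerivAt (x := x)).const_mul (-2)).smul_const s).add
    (((hasFDerivAt_id x).norm_sq).smul_const (1 : ℍ[ℝ])) |>.const_add (s ^ 2)
  refine (h.congr_fderiv ?_).congr_of_eventuallyEq (Filter.Eventually.of_forall fun y => ?_)
  · ext1 v
    simp only [QcsDeriv_apply]
    ext <;> simp [hR]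
  · have h2 : (2 : ℍ[ℝ]) = ((2 : ℝ) : ℍ[ℝ]) := by norm_cast
    simp only [Qcs, h2]
    rw [← Quaternion.coe_mul, Quaternion.coe_mul_eq_smul]
    ext <;> simp [hR, -Quaternion.coe_pow] <;> ring

theorem commute_Qcs_QcsDeriv (s x v : ℍ[ℝ]) : Commute (Qcs s x) (QcsDeriv s x v) := by
  have hs : Commute (Qcs s x) s := by
    have h2 : Commute (2 * ((x.re : ℝ) : ℍ[ℝ])) s :=
      (Commute.ofNat_left 2 s).mul_left (Quaternion.coe_commutes _ _)
    exact (((Commute.refl s).pow_left 2).sub_left (h2.mul_left (Commute.refl s))).add_left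
      (Quaternion.coe_commutes _ _)
  rw [QcsDeriv_apply]
  exact (hs.smul_right _).add_right (Quaternion.coe_commutes _ _).symm

/-- The power rule for negative powers when the differential commutes with the value. -/
theorem HasFDerivAt.inv_pow_of_commute {f : ℍ[ℝ] → ℍ[ℝ]} {f' : ℍ[ℝ] →L[ℝ] ℍ[ℝ]} {x : ℍ[ℝ]}
    (hf : HasFDerivAt f f' x) (hx : f x ≠ 0) (hc : ∀ v, Commute (f x) (f' v)) (m : ℕ) :
    ∃ g' : ℍ[ℝ] →L[ℝ] ℍ[ℝ], HasFDerivAt (fun y => (f y)⁻¹ ^ m) g' x ∧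
      ∀ v, g' v = f' v * ((-(m : ℝ)) • (f x)⁻¹ ^ (m + 1)) := by
  induction m with
  | zero => exact ⟨0, by simpa using hasFDerivAt_const (1 : ℍ[ℝ]) x, by simp⟩
  | succ m ih =>
    obtain ⟨g', hg, hg'⟩ := ih
    have hi := (hasFDerivAt_inv' (𝕜 := ℝ) hx).comp x hf
    refine ⟨_, (hg.mul' hi).congr_of_eventuallyEq
      (Filter.Eventually.of_forall fun y => pow_succ _ _), fun v => ?_⟩
    have hcp : (f x)⁻¹ ^ (m + 1) * f' v = f' v * (f x)⁻¹ ^ (m + 1) :=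
      ((hc v).inv_left₀.pow_left (m + 1)).eq
    have e : (f x)⁻¹ ^ m * ((f x)⁻¹ * f' v * (f x)⁻¹) = f' v * (f x)⁻¹ ^ (m + 1 + 1) := by
      rw [← mul_assoc, ← mul_assoc, ← pow_succ, hcp, mul_assoc, ← pow_succ]
    have e' : f' v * (f x)⁻¹ ^ (m + 1) * (f x)⁻¹ = f' v * (f x)⁻¹ ^ (m + 1 + 1) := by
      rw [mul_assoc, ← pow_succ]
    change (f x)⁻¹ ^ m * -((f x)⁻¹ * f' v * (f x)⁻¹) + g' v * (f x)⁻¹ = _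
    rw [hg', mul_neg, e, mul_smul_comm, mul_smul_comm, smul_mul_assoc, e']
    push_cast
    module

theorem qi_components : qi.re = 0 ∧ qi.imI = 1 ∧ qi.imJ = 0 ∧ qi.imK = 0 :=
  ⟨rfl, rfl, rfl, rfl⟩

theorem qj_components : qj.re = 0 ∧ qj.imI = 0 ∧ qj.imJ = 1 ∧ qj.imK = 0 :=
  ⟨rfl, rfl, rfl, rfl⟩

theorem qk_components : qk.re = 0 ∧ qk.imI = 0 ∧ qk.imJ = 0 ∧ qk.imK = 1 :=
  ⟨rfl, rfl, rfl, rfl⟩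

theorem sum_basis_mul_QcsDeriv (s x : ℍ[ℝ]) :
    (s - star x) * QcsDeriv s x 1 + qi * ((s - star x) * QcsDeriv s x qi)
      + qj * ((s - star x) * QcsDeriv s x qj) + qk * ((s - star x) * QcsDeriv s x qk)
      = (-2 : ℝ) • Qcs s x := by
  have h2 : (2 : ℍ[ℝ]) = ((2 : ℝ) : ℍ[ℝ]) := by norm_cast
  have hn : ‖x‖ ^ 2 = x.re ^ 2 + x.imI ^ 2 + x.imJ ^ 2 + x.imK ^ 2 := by
    rw [sq, ← Quaternion.normSq_eq_norm_mul_self, Quaternion.normSq_def']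
  simp only [QcsDeriv_apply, Qcs, hn, Quaternion.inner_def, sq s, h2]
  ext <;> simp [qi_components, qj_components, qk_components, -Quaternion.coe_pow,
    -Quaternion.coe_add] <;> ring

theorem sum_basis_mul_star :
    star (1 : ℍ[ℝ]) + qi * star qi + qj * star qj + qk * star qk = ((4 : ℝ) : ℍ[ℝ]) := by
  ext <;> simp [qi_components, qj_components, qk_components]; norm_num

/-- For `Q_{c,s}(x) ≠ 0` and `m ∈ ℕ`, the map `F(y) = (s − ȳ)·Q_{c,s}(y)^{−m}` is real
differentiable at `x` and `(D F)(x) = 2(m − 2)·Q_{c,s}(x)^{−m}`. -/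
theorem statement10 (s x : ℍ[ℝ]) (hQ : Qcs s x ≠ 0) (m : ℕ) :
    DifferentiableAt ℝ (fun y => (s - star y) * Qcs s y ^ (-(m : ℤ))) x ∧
    Dirac (fun y => (s - star y) * Qcs s y ^ (-(m : ℤ))) x
      = ((2 * ((m : ℝ) - 2) : ℝ) : ℍ[ℝ]) * Qcs s x ^ (-(m : ℤ)) := by
  obtain ⟨g', hg, hg'⟩ := (hasFDerivAt_Qcs s x).inv_pow_of_commute hQ (commute_Qcs_QcsDeriv s x) m
  have hz : ∀ y, Qcs s y ^ (-(m : ℤ)) = (Qcs s y)⁻¹ ^ m := fun y => by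
    rw [zpow_neg, zpow_natCast, inv_pow]
  simp only [hz]
  have : StarModule ℝ ℍ[ℝ] := ⟨fun r q => by ext <;> simp⟩
  have hstar : HasFDerivAt (fun y : ℍ[ℝ] => s - star y) _ x :=
    ((starL' ℝ : ℍ[ℝ] ≃L[ℝ] ℍ[ℝ]).hasFDerivAt (x := x)).const_sub s
  have hF : HasFDerivAt (fun y => (s - star y) * (Qcs s y)⁻¹ ^ m) _ x := hstar.mul' hg
  refine ⟨hF.differentiableAt, ?_⟩
  have happ : ∀ v, fderiv ℝ (fun y => (s - star y) * (Qcs s y)⁻¹ ^ m) x v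
      = (s - star x) * QcsDeriv s x v * ((-(m : ℝ)) • (Qcs s x)⁻¹ ^ (m + 1))
        - star v * (Qcs s x)⁻¹ ^ m := fun v => by
    rw [hF.fderiv]
    simp [hg', mul_assoc, sub_eq_add_neg]
  have hcancel : Qcs s x * (Qcs s x)⁻¹ ^ (m + 1) = (Qcs s x)⁻¹ ^ m := by
    rw [pow_succ', mul_inv_cancel_left₀ hQ]
  calc Dirac (fun y => (s - star y) * (Qcs s y)⁻¹ ^ m) x
      = ((s - star x) * QcsDeriv s x 1 + qi * ((s - star x) * QcsDeriv s x qi)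
          + qj * ((s - star x) * QcsDeriv s x qj) + qk * ((s - star x) * QcsDeriv s x qk))
          * ((-(m : ℝ)) • (Qcs s x)⁻¹ ^ (m + 1))
        - (star (1 : ℍ[ℝ]) + qi * star qi + qj * star qj + qk * star qk)
          * (Qcs s x)⁻¹ ^ m := by
        simp only [Dirac, happ, mul_sub (α := ℍ[ℝ]) _ (_ * _) (_ * _), add_mul, ← mul_assoc]
        abel
    _ = _ := by
        rw [sum_basis_mul_QcsDeriv, sum_basis_mul_star, smul_mul_smul_comm, hcancel,
          Quaternion.coe_mul_eq_smul, Quaternion.coe_mul_eq_smul]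
        module
end

section
/- For every m ∈ ℕ and every quaternion x ∈ ℍ, the power functions p_m : ℍ → ℍ, p_m(y) = y^m, satisfy (Δ p_{m+1})(x) − x · (Δ p_m)(x) = 2 · (D p_m)(x), where D p_m = ∂₀p_m + i·∂₁p_m + j·∂₂p_m + k·∂₃p_m is the Cauchy–Fueter operator applied to p_m and Δ p = Σ_{μ=0}^{3} ∂_μ(∂_μ p) is the Laplacian. -/
open Quaternion

/-- The Laplacian `(Δ F)(x) = Σ_{μ=0}^{3} ∂_μ(∂_μ F)(x)`. -/
noncomputable def lap (F : ℍ[ℝ] → ℍ[ℝ]) (x : ℍ[ℝ]) : ℍ[ℝ] :=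
  fderiv ℝ (fun y => fderiv ℝ F y 1) x 1
    + fderiv ℝ (fun y => fderiv ℝ F y qi) x qi
    + fderiv ℝ (fun y => fderiv ℝ F y qj) x qj
    + fderiv ℝ (fun y => fderiv ℝ F y qk) x qk

/-- First-order Leibniz rule for left multiplication by the variable. -/
theorem fderiv_id_mul_apply {A : Type*} [NormedRing A] [NormedAlgebra ℝ A] {G : A → A} {y : A}
    (hG : DifferentiableAt ℝ G y) (e : A) :
    fderiv ℝ (fun z => z * G z) y e = e * G y + y * fderiv ℝ G y e := by
  rw [fderiv_fun_mul' differentiableAt_fun_id hG]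
  simp [add_comm]

/-- Second-order Leibniz rule for left multiplication by the variable. -/
theorem fderiv_fderiv_id_mul_apply {A : Type*} [NormedRing A] [NormedAlgebra ℝ A] {G : A → A}
    (hG : ContDiff ℝ 2 G) (x e : A) :
    fderiv ℝ (fun y => fderiv ℝ (fun z => z * G z) y e) x e
      = 2 * (e * fderiv ℝ G x e) + x * fderiv ℝ (fun y => fderiv ℝ G y e) x e := by
  have hG₁ : Differentiable ℝ G := hG.differentiable (by norm_num)
  have hG₂ : Differentiable ℝ (fun y => fderiv ℝ G y e) :=
    ((hG.fderiv_right (m := 1) (by norm_num)).clm_apply contDiff_const).differentiable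
      (by norm_num)
  simp_rw [fun y => fderiv_id_mul_apply (hG₁ y) e]
  rw [fderiv_fun_add ((hG₁ x).const_mul e) (differentiableAt_fun_id.fun_mul (hG₂ x)),
    fderiv_const_mul (hG₁ x), add_apply, fderiv_id_mul_apply (hG₂ x)]
  simp [two_mul, add_assoc]

/-- The Laplacian of `y * G y` is `2 * Dirac G + x * lap G`. -/
theorem lap_id_mul {G : ℍ[ℝ] → ℍ[ℝ]} (hG : ContDiff ℝ 2 G) (x : ℍ[ℝ]) :
    lap (fun y => y * G y) x = 2 * Dirac G x + x * lap G x := by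
  simp only [lap, Dirac, fderiv_fderiv_id_mul_apply hG, one_mul, mul_add]
  abel

/-- For every `m ∈ ℕ` and `x ∈ ℍ`, the power functions `p_m(y) = y^m` satisfy
`(Δ p_{m+1})(x) − x·(Δ p_m)(x) = 2·(D p_m)(x)`. -/
theorem statement14 (m : ℕ) (x : ℍ[ℝ]) :
    lap (fun y => y ^ (m + 1)) x - x * lap (fun y => y ^ m) x
      = 2 * Dirac (fun y => y ^ m) x := by
  simp_rw [pow_succ']
  rw [lap_id_mul (contDiff_fun_id.pow m), add_sub_cancel_right]
end
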